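/- Let Φ be a Hawkes kernel matrix satisfying hypothesis (H), Ψ = Σ_{k=1}^∞ Φ^{⋆k}, Σ a diagonal D×D matrix with strictly positive diagonal entries, and let g be the associated conditional-expectation matrix. Then for every purely imaginary z (Re(z) = 0), the Laplace transform of g satisfies ĝ(z) = (I + Ψ̂(z)) Σ (I + Ψ̂(−z)ᵀ) Σ^{−1} − I. -/

import Mathlib

open MeasureTheory Matrix Filter Set

/-- Entrywise matrix convolution:
`(A ⋆ B)^{ij}(t) = ∑_{k} ∫ A^{ik}(s) B^{kj}(t - s) ds`. -/
noncomputable def mconv (D : ℕ) (A B : ℝ → Matrix (Fin D) (Fin D) ℝ) :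
    ℝ → Matrix (Fin D) (Fin D) ℝ :=
  fun t => Matrix.of fun i j => ∑ k : Fin D, ∫ s : ℝ, A s i k * B (t - s) k j

/-- `mconvIter D Φ k` is the `(k+1)`-fold matrix convolution `Φ^{⋆(k+1)}`. -/
noncomputable def mconvIter (D : ℕ) (Φ : ℝ → Matrix (Fin D) (Fin D) ℝ) :
    ℕ → ℝ → Matrix (Fin D) (Fin D) ℝ
  | 0 => Φ
  | (k + 1) => mconv D Φ (mconvIter D Φ k)

/-- `Ψ = ∑_{k=1}^∞ Φ^{⋆k}`, defined entrywise as a pointwise sum. -/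
noncomputable def hawkesPsi (D : ℕ) (Φ : ℝ → Matrix (Fin D) (Fin D) ℝ) :
    ℝ → Matrix (Fin D) (Fin D) ℝ :=
  fun t => Matrix.of fun i j => ∑' k : ℕ, mconvIter D Φ k t i j

/-- The matrix `‖Φ‖` of `L¹` norms: `‖Φ‖^{ij} = ∫ φ^{ij}(t) dt` (entries nonnegative). -/
noncomputable def kernelNorm (D : ℕ) (Φ : ℝ → Matrix (Fin D) (Fin D) ℝ) :
    Matrix (Fin D) (Fin D) ℝ :=
  Matrix.of fun i j => ∫ t : ℝ, Φ t i j

/-- A Hawkes kernel matrix: measurable, nonnegative, integrable and causal entries. -/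
def IsHawkesKernel (D : ℕ) (Φ : ℝ → Matrix (Fin D) (Fin D) ℝ) : Prop :=
  (∀ i j, Measurable fun t => Φ t i j) ∧
  (∀ t, ∀ i j, 0 ≤ Φ t i j) ∧
  (∀ i j, Integrable fun t => Φ t i j) ∧
  (∀ t < (0 : ℝ), Φ t = 0)

/-- Hypothesis (H): the spectral radius of `‖Φ‖` is strictly smaller than 1. -/
def HypothesisH (D : ℕ) (Φ : ℝ → Matrix (Fin D) (Fin D) ℝ) : Prop :=
  spectralRadius ℂ ((kernelNorm D Φ).map Complex.ofReal) < 1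

/-- `q(t) = Σ Ψ(-t)ᵀ Σ⁻¹`. -/
noncomputable def hawkesQ (D : ℕ) (Φ : ℝ → Matrix (Fin D) (Fin D) ℝ)
    (S : Matrix (Fin D) (Fin D) ℝ) : ℝ → Matrix (Fin D) (Fin D) ℝ :=
  fun t => S * (hawkesPsi D Φ (-t))ᵀ * S⁻¹

/-- The conditional-expectation matrix
`g(t) = Ψ(t) + Σ Ψ(-t)ᵀ Σ⁻¹ + (Ψ ⋆ q)(t)`. -/
noncomputable def hawkesG (D : ℕ) (Φ : ℝ → Matrix (Fin D) (Fin D) ℝ)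
    (S : Matrix (Fin D) (Fin D) ℝ) : ℝ → Matrix (Fin D) (Fin D) ℝ :=
  fun t => hawkesPsi D Φ t + hawkesQ D Φ S t +
    mconv D (hawkesPsi D Φ) (hawkesQ D Φ S) t

/-- Entrywise Laplace transform `F̂(z) = ∫ F(t) e^{zt} dt`. -/
noncomputable def mlaplace (D : ℕ) (F : ℝ → Matrix (Fin D) (Fin D) ℝ) (z : ℂ) :
    Matrix (Fin D) (Fin D) ℂ :=
  Matrix.of fun i j => ∫ t : ℝ, (F t i j : ℂ) * Complex.exp (z * t)

/-!
On the imaginary axis the weight `exp (z * t)` has modulus one, so the Laplace transform is defined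
on all of `L¹` and turns convolutions into products; reversing time replaces `z` by `-z`. Hence
`q̂(z) = Σ Ψ̂(-z)ᵀ Σ⁻¹` and `I + ĝ(z) = (I + Ψ̂(z)) (I + q̂(z))`. The analytic input is the
integrability of `Ψ`: the `L¹` norms of the entries of `Φ^{⋆k}` are at most the entries of `‖Φ‖^k`,
and the powers of a matrix of spectral radius less than one are summable.
-/

section Powers

variable {A n : Type*} [NormedRing A] [NormedAlgebra ℂ A] [CompleteSpace A]
  [Fintype n] [DecidableEq n]

-- The Neumann series of `a` is the power series of `z ↦ (1 - z • a)⁻¹` at `z = 1`.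
theorem summable_pow_of_spectralRadius_lt_one {a : A} (h : spectralRadius ℂ a < 1) :
    Summable fun k : ℕ => a ^ k := by
  obtain ⟨r, one_lt_r, hr⟩ := ENNReal.lt_iff_exists_nnreal_btwn.1 (ENNReal.one_lt_inv.2 h)
  have r_pos : 0 < r := zero_lt_one.trans (by exact_mod_cast one_lt_r)
  have series := (spectrum.hasFPowerSeriesOnBall_inverse_one_sub_smul ℂ a).exchange_radius
    ((spectrum.differentiableOn_inverse_one_sub_smul hr).hasFPowerSeriesOnBall r_pos)
  have one_mem : (1 : ℂ) ∈ Metric.eball 0 (r : ENNReal) := by simpa using one_lt_r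
  simpa using (series.hasSum one_mem).summable

open scoped Matrix.Norms.Operator in
theorem summable_pow_apply_of_spectralRadius_lt_one {M : Matrix n n ℝ}
    (h : spectralRadius ℂ (M.map Complex.ofReal) < 1) (i j : n) :
    Summable fun k : ℕ => (M ^ k) i j := by
  have hM : Summable fun k : ℕ => M.map Complex.ofReal ^ k :=
    summable_pow_of_spectralRadius_lt_one h
  refine Complex.summable_ofReal.1 ((Pi.summable.1 (Pi.summable.1 hM i) j).congr fun k => ?_)
  exact (congrFun₂ (Matrix.map_pow M Complex.ofRealHom k) i j).symm

end Powers

section MatrixInverse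

variable {K L n : Type*} [Field K] [Field L] [Fintype n] [DecidableEq n]

theorem inv_map_ringHom (f : K →+* L) (M : Matrix n n K) : (M.map f)⁻¹ = M⁻¹.map f := by
  rw [Matrix.inv_def, Matrix.inv_def, Ring.inverse_eq_inv', Ring.inverse_eq_inv',
    Matrix.map_smulₛₗ f f _ (map_mul f _), map_inv₀, f.map_det]
  exact congrArg _ (f.map_adjugate M).symm

theorem isUnit_det_of_isDiag {M : Matrix n n K} (hM : M.IsDiag) (h : ∀ i, M i i ≠ 0) :
    IsUnit M.det := by
  rw [← hM.diagonal_diag, det_diagonal]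
  exact (Finset.prod_ne_zero_iff.2 fun i _ => h i).isUnit

end MatrixInverse

section Integration

open scoped Convolution

theorem integrable_tsum_of_summable_integral_norm {α E ι : Type*} [MeasurableSpace α]
    {μ : Measure α} [NormedAddCommGroup E] [CompleteSpace E] [Countable ι]
    {F : ι → α → E} (hF : ∀ i, Integrable (F i) μ) (hsum : Summable fun i => ∫ a, ‖F i a‖ ∂μ) :
    Integrable (fun a => ∑' i, F i a) μ := by
  have hsum' : ∑' i, ‖(hF i).toL1 (F i)‖ₑ ≠ ⊤ := by
    simpa only [tsum_enorm_ne_top_iff_summable_norm, L1.norm_of_fun_eq_integral_norm] using hsum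
  refine (L1.integrable_coeFn (∑' i, (hF i).toL1 (F i))).congr ?_
  filter_upwards [Lp.coeFn_tsum hsum', ae_all_iff.2 fun i => (hF i).coeFn_toL1] with a ha hFa
  rw [ha]
  exact tsum_congr hFa

theorem integral_norm_convolution_le {G 𝕜 : Type*} [RCLike 𝕜] [AddGroup G] [MeasurableSpace G]
    [MeasurableAdd₂ G] [MeasurableNeg G] {μ : Measure G} [SFinite μ] [μ.IsAddRightInvariant]
    {f g : G → 𝕜} (hf : Integrable f μ) (hg : Integrable g μ) :
    ∫ x, ‖(f ⋆[ContinuousLinearMap.mul 𝕜 𝕜, μ] g) x‖ ∂μ ≤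
      (∫ x, ‖f x‖ ∂μ) * ∫ x, ‖g x‖ ∂μ := by
  set normConv := (fun x => ‖f x‖) ⋆[ContinuousLinearMap.mul ℝ ℝ, μ] fun x => ‖g x‖
  have norm_le (x : G) : ‖(f ⋆[ContinuousLinearMap.mul 𝕜 𝕜, μ] g) x‖ ≤ normConv x := by
    refine (norm_integral_le_integral_norm _).trans_eq ?_
    simp only [ContinuousLinearMap.mul_apply', norm_mul, normConv, convolution_def]
  calc ∫ x, ‖(f ⋆[ContinuousLinearMap.mul 𝕜 𝕜, μ] g) x‖ ∂μ
      ≤ ∫ x, normConv x ∂μ :=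
        integral_mono (hf.integrable_convolution _ hg).norm
          (hf.norm.integrable_convolution _ hg.norm) norm_le
    _ = (∫ x, ‖f x‖ ∂μ) * ∫ x, ‖g x‖ ∂μ := integral_convolution _ hf.norm hg.norm

end Integration

section EntrywiseL1

open scoped Convolution

variable {D : ℕ} {A B Φ : ℝ → Matrix (Fin D) (Fin D) ℝ}

/-- The matrix of the `L¹` norms of the entries of `F`: the notion `‖F‖` of `kernelNorm`, extended
to entries of arbitrary sign. -/
noncomputable def entrywiseL1Norm {m n : Type*} (F : ℝ → Matrix m n ℝ) : Matrix m n ℝ :=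
  Matrix.of fun i j => ∫ t, ‖F t i j‖

theorem entrywiseL1Norm_nonneg {m n : Type*} (F : ℝ → Matrix m n ℝ) (i : m) (j : n) :
    0 ≤ entrywiseL1Norm F i j :=
  integral_nonneg fun _ => norm_nonneg _

theorem IsHawkesKernel.entrywiseL1Norm_eq_kernelNorm (hΦ : IsHawkesKernel D Φ) :
    entrywiseL1Norm Φ = kernelNorm D Φ := by
  ext i j
  exact integral_congr_ae (ae_of_all _ fun t => Real.norm_of_nonneg (hΦ.2.1 t i j))

theorem mconv_apply (A B : ℝ → Matrix (Fin D) (Fin D) ℝ) (t : ℝ) (i j : Fin D) :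
    mconv D A B t i j =
      ∑ k, ((A · i k) ⋆[ContinuousLinearMap.mul ℝ ℝ] (B · k j)) t :=
  rfl

theorem integrable_mconv (hA : ∀ i j, Integrable fun t => A t i j)
    (hB : ∀ i j, Integrable fun t => B t i j) (i j : Fin D) :
    Integrable fun t => mconv D A B t i j := by
  simp only [mconv_apply]
  exact integrable_finsetSum _ fun k _ => (hA i k).integrable_convolution _ (hB k j)

theorem entrywiseL1Norm_mconv_le (hA : ∀ i j, Integrable fun t => A t i j)
    (hB : ∀ i j, Integrable fun t => B t i j) (i j : Fin D) :
    entrywiseL1Norm (mconv D A B) i j ≤ (entrywiseL1Norm A * entrywiseL1Norm B) i j := by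
  have conv_integrable (k : Fin D) := (hA i k).integrable_convolution
    (ContinuousLinearMap.mul ℝ ℝ) (hB k j)
  calc ∫ t, ‖mconv D A B t i j‖
      ≤ ∫ t, ∑ k, ‖((A · i k) ⋆[ContinuousLinearMap.mul ℝ ℝ] (B · k j)) t‖ :=
        integral_mono (integrable_mconv hA hB i j).norm
          (integrable_finsetSum _ fun k _ => (conv_integrable k).norm) fun t => by
            rw [mconv_apply]
            exact norm_sum_le _ _
    _ = ∑ k, ∫ t, ‖((A · i k) ⋆[ContinuousLinearMap.mul ℝ ℝ] (B · k j)) t‖ :=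
        integral_finsetSum _ fun k _ => (conv_integrable k).norm
    _ ≤ (entrywiseL1Norm A * entrywiseL1Norm B) i j :=
        Finset.sum_le_sum fun k _ => integral_norm_convolution_le (hA i k) (hB k j)

theorem integrable_mconvIter (hΦ : ∀ i j, Integrable fun t => Φ t i j) (k : ℕ) :
    ∀ i j, Integrable fun t => mconvIter D Φ k t i j := by
  induction k with
  | zero => exact hΦ
  | succ k ih => exact integrable_mconv hΦ ih

theorem entrywiseL1Norm_mconvIter_le (hΦ : ∀ i j, Integrable fun t => Φ t i j) (k : ℕ) :
    ∀ i j, entrywiseL1Norm (mconvIter D Φ k) i j ≤ (entrywiseL1Norm Φ ^ (k + 1)) i j := by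
  induction k with
  | zero => simp [mconvIter]
  | succ k ih =>
    intro i j
    calc entrywiseL1Norm (mconvIter D Φ (k + 1)) i j
        ≤ (entrywiseL1Norm Φ * entrywiseL1Norm (mconvIter D Φ k)) i j :=
          entrywiseL1Norm_mconv_le hΦ (integrable_mconvIter hΦ k) i j
      _ ≤ (entrywiseL1Norm Φ * entrywiseL1Norm Φ ^ (k + 1)) i j := by
          rw [Matrix.mul_apply, Matrix.mul_apply]
          gcongr with l
          · exact entrywiseL1Norm_nonneg Φ i l
          · exact ih l j
      _ = (entrywiseL1Norm Φ ^ (k + 1 + 1)) i j := by rw [pow_succ' _ (k + 1)]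

theorem integrable_hawkesPsi (hΦ : ∀ i j, Integrable fun t => Φ t i j)
    (hH : spectralRadius ℂ ((entrywiseL1Norm Φ).map Complex.ofReal) < 1) (i j : Fin D) :
    Integrable fun t => hawkesPsi D Φ t i j := by
  have summable_pow : Summable fun k : ℕ => (entrywiseL1Norm Φ ^ (k + 1)) i j :=
    (summable_nat_add_iff (f := fun k => (entrywiseL1Norm Φ ^ k) i j) 1).2
      (summable_pow_apply_of_spectralRadius_lt_one hH i j)
  have summable_norms : Summable fun k => ∫ t, ‖mconvIter D Φ k t i j‖ :=
    summable_pow.of_nonneg_of_le (fun _ => entrywiseL1Norm_nonneg _ i j)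
      fun k => entrywiseL1Norm_mconvIter_le hΦ k i j
  simp only [hawkesPsi, Matrix.of_apply]
  exact integrable_tsum_of_summable_integral_norm
    (fun k => integrable_mconvIter hΦ k i j) summable_norms

end EntrywiseL1

section Laplace

open scoped Convolution

variable {m n p : Type*}

/-- The matrix-valued integrand `F(t) e^{zt}` of the Laplace transform `mlaplace`. -/
noncomputable def laplaceIntegrand (F : ℝ → Matrix m n ℝ) (z : ℂ) (t : ℝ) : Matrix m n ℂ :=
  Matrix.of fun i j => (F t i j : ℂ) * Complex.exp (z * t)

/-- Absolute convergence of the Laplace transform of `F` at `z`, entry by entry: the condition under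
which `mlaplace` is the Laplace transform and not a junk value. -/
def LaplaceConvergent (F : ℝ → Matrix m n ℝ) (z : ℂ) : Prop :=
  ∀ i j, Integrable fun t => laplaceIntegrand F z t i j

theorem laplaceIntegrand_add (F G : ℝ → Matrix m n ℝ) (z : ℂ) (t : ℝ) :
    laplaceIntegrand (fun s => F s + G s) z t =
      laplaceIntegrand F z t + laplaceIntegrand G z t := by
  ext i j
  simp [laplaceIntegrand, add_mul]

theorem laplaceIntegrand_const_mul [Fintype m] (M : Matrix p m ℝ) (F : ℝ → Matrix m n ℝ)
    (z : ℂ) (t : ℝ) :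
    laplaceIntegrand (fun s => M * F s) z t = M.map Complex.ofReal * laplaceIntegrand F z t := by
  ext i j
  simp [laplaceIntegrand, Matrix.mul_apply, Finset.sum_mul, mul_assoc]

theorem laplaceIntegrand_mul_const [Fintype n] (F : ℝ → Matrix m n ℝ) (M : Matrix n p ℝ)
    (z : ℂ) (t : ℝ) :
    laplaceIntegrand (fun s => F s * M) z t = laplaceIntegrand F z t * M.map Complex.ofReal := by
  ext i j
  simp [laplaceIntegrand, Matrix.mul_apply, Finset.sum_mul, mul_right_comm]

theorem laplaceIntegrand_comp_neg (F : ℝ → Matrix m n ℝ) (z : ℂ) (t : ℝ) :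
    laplaceIntegrand (fun s => F (-s)) z t = laplaceIntegrand F (-z) (-t) := by
  simp [laplaceIntegrand]

theorem laplaceIntegrand_mconv {D : ℕ} (A B : ℝ → Matrix (Fin D) (Fin D) ℝ) (z : ℂ) (t : ℝ)
    (i j : Fin D) :
    laplaceIntegrand (mconv D A B) z t i j =
      ∑ k, ((laplaceIntegrand A z · i k) ⋆[ContinuousLinearMap.mul ℂ ℂ]
        (laplaceIntegrand B z · k j)) t := by
  have exp_split (s : ℝ) :
      Complex.exp (z * t) = Complex.exp (z * s) * Complex.exp (z * (t - s : ℝ)) := by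
    rw [← Complex.exp_add]
    push_cast
    ring_nf
  simp only [laplaceIntegrand, Matrix.of_apply, mconv_apply, convolution_def,
    ContinuousLinearMap.mul_apply', Complex.ofReal_sum, Finset.sum_mul, ← integral_complex_ofReal,
    ← integral_mul_const]
  refine Finset.sum_congr rfl fun k _ => integral_congr_ae (ae_of_all _ fun s => ?_)
  simp only [exp_split s, Complex.ofReal_mul]
  ring

theorem laplaceConvergent_of_integrable {F : ℝ → Matrix m n ℝ} {z : ℂ}
    (hF : ∀ i j, Integrable fun t => F t i j) (hz : z.re = 0) : LaplaceConvergent F z :=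
  fun i j => (hF i j).ofReal.mul_bdd (c := 1) (by fun_prop)
    (ae_of_all _ fun t => by simp [Complex.norm_exp, hz])

namespace LaplaceConvergent

variable {F G : ℝ → Matrix m n ℝ} {z : ℂ}

theorem add (hF : LaplaceConvergent F z) (hG : LaplaceConvergent G z) :
    LaplaceConvergent (fun t => F t + G t) z := by
  intro i j
  simp only [laplaceIntegrand_add]
  exact (hF i j).add (hG i j)

theorem const_mul [Fintype m] (hF : LaplaceConvergent F z) (M : Matrix p m ℝ) :
    LaplaceConvergent (fun t => M * F t) z := by
  intro i j
  simp only [laplaceIntegrand_const_mul, Matrix.mul_apply]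
  exact integrable_finsetSum _ fun k _ => (hF k j).const_mul _

theorem mul_const [Fintype n] (hF : LaplaceConvergent F z) (M : Matrix n p ℝ) :
    LaplaceConvergent (fun t => F t * M) z := by
  intro i j
  simp only [laplaceIntegrand_mul_const, Matrix.mul_apply]
  exact integrable_finsetSum _ fun k _ => (hF i k).mul_const _

theorem transpose (hF : LaplaceConvergent F z) : LaplaceConvergent (fun t => (F t)ᵀ) z :=
  fun i j => hF j i

theorem comp_neg (hF : LaplaceConvergent F (-z)) : LaplaceConvergent (fun t => F (-t)) z := by
  intro i j
  simp only [laplaceIntegrand_comp_neg]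
  exact (hF i j).comp_neg

theorem mconv {D : ℕ} {A B : ℝ → Matrix (Fin D) (Fin D) ℝ} (hA : LaplaceConvergent A z)
    (hB : LaplaceConvergent B z) : LaplaceConvergent (mconv D A B) z := by
  intro i j
  simp only [laplaceIntegrand_mconv]
  exact integrable_finsetSum _ fun k _ => (hA i k).integrable_convolution _ (hB k j)

end LaplaceConvergent

variable {D : ℕ} {F G : ℝ → Matrix (Fin D) (Fin D) ℝ} {z : ℂ}

theorem mlaplace_apply (F : ℝ → Matrix (Fin D) (Fin D) ℝ) (z : ℂ) (i j : Fin D) :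
    mlaplace D F z i j = ∫ t, laplaceIntegrand F z t i j :=
  rfl

theorem mlaplace_add (hF : LaplaceConvergent F z) (hG : LaplaceConvergent G z) :
    mlaplace D (fun t => F t + G t) z = mlaplace D F z + mlaplace D G z := by
  ext i j
  simp only [mlaplace_apply, laplaceIntegrand_add, Matrix.add_apply]
  exact integral_add (hF i j) (hG i j)

theorem mlaplace_const_mul (M : Matrix (Fin D) (Fin D) ℝ) (hF : LaplaceConvergent F z) :
    mlaplace D (fun t => M * F t) z = M.map Complex.ofReal * mlaplace D F z := by
  ext i j
  simp only [mlaplace_apply, laplaceIntegrand_const_mul, Matrix.mul_apply]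
  rw [integral_finsetSum _ fun k _ => (hF k j).const_mul _]
  simp only [integral_const_mul]

theorem mlaplace_mul_const (hF : LaplaceConvergent F z) (M : Matrix (Fin D) (Fin D) ℝ) :
    mlaplace D (fun t => F t * M) z = mlaplace D F z * M.map Complex.ofReal := by
  ext i j
  simp only [mlaplace_apply, laplaceIntegrand_mul_const, Matrix.mul_apply]
  rw [integral_finsetSum _ fun k _ => (hF i k).mul_const _]
  simp only [integral_mul_const]

theorem mlaplace_transpose (F : ℝ → Matrix (Fin D) (Fin D) ℝ) (z : ℂ) :
    mlaplace D (fun t => (F t)ᵀ) z = (mlaplace D F z)ᵀ :=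
  rfl

theorem mlaplace_comp_neg (F : ℝ → Matrix (Fin D) (Fin D) ℝ) (z : ℂ) :
    mlaplace D (fun t => F (-t)) z = mlaplace D F (-z) := by
  ext i j
  simp only [mlaplace_apply, laplaceIntegrand_comp_neg]
  exact integral_neg_eq_self (fun t => laplaceIntegrand F (-z) t i j) volume

theorem mlaplace_mconv (hF : LaplaceConvergent F z) (hG : LaplaceConvergent G z) :
    mlaplace D (mconv D F G) z = mlaplace D F z * mlaplace D G z := by
  ext i j
  simp only [mlaplace_apply, laplaceIntegrand_mconv, Matrix.mul_apply]
  rw [integral_finsetSum _ fun k _ => (hF i k).integrable_convolution _ (hG k j)]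
  exact Finset.sum_congr rfl fun k _ => integral_convolution _ (hF i k) (hG k j)

end Laplace

section Hawkes

variable {D : ℕ} {Φ : ℝ → Matrix (Fin D) (Fin D) ℝ} {S : Matrix (Fin D) (Fin D) ℝ} {z : ℂ}

theorem laplaceConvergent_hawkesQ (hΨ : LaplaceConvergent (hawkesPsi D Φ) (-z)) :
    LaplaceConvergent (hawkesQ D Φ S) z :=
  (hΨ.comp_neg.transpose.const_mul S).mul_const S⁻¹

theorem mlaplace_hawkesQ (hΨ : LaplaceConvergent (hawkesPsi D Φ) (-z)) :
    mlaplace D (hawkesQ D Φ S) z =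
      S.map Complex.ofReal * (mlaplace D (hawkesPsi D Φ) (-z))ᵀ * (S.map Complex.ofReal)⁻¹ := by
  have hΨT : LaplaceConvergent (fun t => (hawkesPsi D Φ (-t))ᵀ) z := hΨ.comp_neg.transpose
  calc mlaplace D (hawkesQ D Φ S) z
      = mlaplace D (fun t => S * (hawkesPsi D Φ (-t))ᵀ) z * S⁻¹.map Complex.ofReal :=
        mlaplace_mul_const (hΨT.const_mul S) S⁻¹
    _ = S.map Complex.ofReal * (mlaplace D (fun t => hawkesPsi D Φ (-t)) z)ᵀ *
          S⁻¹.map Complex.ofReal := by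
        rw [mlaplace_const_mul S hΨT, mlaplace_transpose]
    _ = S.map Complex.ofReal * (mlaplace D (hawkesPsi D Φ) (-z))ᵀ *
          (S.map Complex.ofReal)⁻¹ := by
        rw [mlaplace_comp_neg]
        exact congrArg _ (inv_map_ringHom Complex.ofRealHom S).symm

theorem mlaplace_hawkesG (hΨ : LaplaceConvergent (hawkesPsi D Φ) z)
    (hq : LaplaceConvergent (hawkesQ D Φ S) z) :
    mlaplace D (hawkesG D Φ S) z =
      (1 + mlaplace D (hawkesPsi D Φ) z) * (1 + mlaplace D (hawkesQ D Φ S) z) - 1 := by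
  calc mlaplace D (hawkesG D Φ S) z
      = mlaplace D (hawkesPsi D Φ) z + mlaplace D (hawkesQ D Φ S) z +
          mlaplace D (hawkesPsi D Φ) z * mlaplace D (hawkesQ D Φ S) z := by
        rw [← mlaplace_mconv hΨ hq, ← mlaplace_add hΨ hq]
        exact mlaplace_add (hΨ.add hq) (hΨ.mconv hq)
    _ = (1 + mlaplace D (hawkesPsi D Φ) z) * (1 + mlaplace D (hawkesQ D Φ S) z) - 1 := by
        noncomm_ring

theorem hawkesG_laplace_general (hΦ : ∀ i j, Integrable fun t => Φ t i j)
    (hH : spectralRadius ℂ ((entrywiseL1Norm Φ).map Complex.ofReal) < 1) (hS : IsUnit S.det)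
    (hz : z.re = 0) :
    mlaplace D (hawkesG D Φ S) z =
      (1 + mlaplace D (hawkesPsi D Φ) z) * S.map Complex.ofReal *
        (1 + (mlaplace D (hawkesPsi D Φ) (-z))ᵀ) * (S.map Complex.ofReal)⁻¹ - 1 := by
  have hΨ : LaplaceConvergent (hawkesPsi D Φ) z :=
    laplaceConvergent_of_integrable (integrable_hawkesPsi hΦ hH) hz
  have hΨneg : LaplaceConvergent (hawkesPsi D Φ) (-z) :=
    laplaceConvergent_of_integrable (integrable_hawkesPsi hΦ hH) (by simp [hz])
  have hSC : S.map Complex.ofReal * (S.map Complex.ofReal)⁻¹ = 1 :=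
    Matrix.mul_nonsing_inv _ (Complex.ofRealHom.map_det S ▸ hS.map Complex.ofRealHom)
  rw [mlaplace_hawkesG hΨ (laplaceConvergent_hawkesQ hΨneg), mlaplace_hawkesQ hΨneg]
  generalize mlaplace D (hawkesPsi D Φ) z = P, (mlaplace D (hawkesPsi D Φ) (-z))ᵀ = Q,
    S.map Complex.ofReal = R at hSC ⊢
  have conj : R * (1 + Q) * R⁻¹ = 1 + R * Q * R⁻¹ := by rw [mul_add, add_mul, mul_one, hSC]
  rw [← conj]
  simp only [mul_assoc]

end Hawkes

/-- On the imaginary axis, the Laplace transform of `g` satisfies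
`ĝ(z) = (I + Ψ̂(z)) Σ (I + Ψ̂(-z)ᵀ) Σ⁻¹ - I`. -/
theorem hawkesG_laplace (D : ℕ) (hD : 0 < D)
    (Φ : ℝ → Matrix (Fin D) (Fin D) ℝ)
    (hΦ : IsHawkesKernel D Φ) (hH : HypothesisH D Φ)
    (S : Matrix (Fin D) (Fin D) ℝ) (hSdiag : S.IsDiag) (hSpos : ∀ i, 0 < S i i) :
    ∀ z : ℂ, z.re = 0 →
      mlaplace D (hawkesG D Φ S) z =
        (1 + mlaplace D (hawkesPsi D Φ) z) * S.map Complex.ofReal *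
          (1 + (mlaplace D (hawkesPsi D Φ) (-z))ᵀ) * (S.map Complex.ofReal)⁻¹ - 1 :=
  fun _ hz => hawkesG_laplace_general hΦ.2.2.1 (hΦ.entrywiseL1Norm_eq_kernelNorm ▸ hH)
    (isUnit_det_of_isDiag hSdiag fun i => (hSpos i).ne') hz
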